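/- Let i = (c, a, b) be a knapsack instance of dimension n with a_1,…,a_n > 0 and b ≥ 0, let V be a value function for i, let k ∈ {1,…,n}, and let η ∈ B_{n,k} satisfy Σ_{j=k+1}^n a_j η_j ≤ b. Then Δ̄(k; i, η) ≤ Σ_{ℓ=1}^{k} Σ { δ̄(ℓ; i, ξ) : ξ ∈ Ξ_ℓ(η,k) and Σ_{j=ℓ+1}^n a_j ξ_j ≤ b }. -/

import Mathlib

/-!
The proof is an induction on `k`, for all `η` at once. The optimal values obey the Bellman recursion
`V*(k+1; η) = max {V*(k; η), c_{k+1} + V*(k; η + e^{k+1})}`, the second option being present only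
if item `k+1` still fits (`knapSubVal_succ_of_fits`, `knapSubVal_succ_of_not_fits`). Since `max` is
1-Lipschitz for the sup norm, `Δ̄(k+1; η)` is at most `δ̄(k+1; η)` plus the errors `Δ̄(k; ·)` at
`η` and (if the item fits) at `η + e^{k+1}`. On the other side, `Ξ_{k+1}(η, k+1) = {η}`, and for
`ℓ ≤ k` the set `Ξ_ℓ(η, k+1)` contains the disjoint sets `Ξ_ℓ(η, k)` and `Ξ_ℓ(η + e^{k+1}, k)`, so
the bound satisfies the matching recursive inequality (`bound_succ`).
-/

/-- `upd n ξ p` is `ξ + e^{p+1}`, i.e. `ξ` with the (0-indexed) position `p` set to `1`. -/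
def upd (n : ℕ) (ξ : Fin n → Bool) (p : ℕ) : Fin n → Bool :=
  fun j => if j.val = p then true else ξ j

/-- `headSum n k a x = Σ_{j=1}^{k} a_j x_j` (0-indexed positions `< k`). -/
def headSum (n k : ℕ) (a : Fin n → ℝ) (x : Fin n → Bool) : ℝ :=
  ∑ j ∈ Finset.univ.filter (fun j : Fin n => j.val < k), if x j then a j else 0

/-- `tailSum n k a ξ = Σ_{j=k+1}^{n} a_j ξ_j` (0-indexed positions `≥ k`). -/
def tailSum (n k : ℕ) (a : Fin n → ℝ) (ξ : Fin n → Bool) : ℝ :=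
  ∑ j ∈ Finset.univ.filter (fun j : Fin n => k ≤ j.val), if ξ j then a j else 0

/-- `knapSubVal n c a b k ξ` is `V*(k; i, ξ)` for the knapsack instance `i = (c,a,b)`:
the maximum of `Σ_{j=1}^k c_j x_j` over `(x_1,…,x_k) ∈ {0,1}^k` subject to
`Σ_{j=1}^k a_j x_j ≤ b − Σ_{j=k+1}^n a_j ξ_j` (and `V*(0; i, ξ) = 0`). -/
noncomputable def knapSubVal (n : ℕ) (c a : Fin n → ℝ) (b : ℝ) (k : ℕ) (ξ : Fin n → Bool) : ℝ :=
  sSup {v | ∃ x : Fin n → Bool,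
    headSum n k a x ≤ b - tailSum n k a ξ ∧ v = headSum n k c x}

/-- The absolute Bellman residual `δ̄(ℓ+1; i, ξ)`, where the item of level `ℓ+1` is the 0-indexed
position `ℓ`. -/
noncomputable def resid (n : ℕ) (c a : Fin n → ℝ) (b : ℝ) (V : ℕ → (Fin n → Bool) → ℝ)
    (ℓ : Fin n) (ξ : Fin n → Bool) : ℝ :=
  if a ℓ + tailSum n (ℓ.val + 1) a ξ ≤ b then
    |max (V ℓ.val ξ) (c ℓ + V ℓ.val (upd n ξ ℓ.val)) - V (ℓ.val + 1) ξ|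
  else
    |V ℓ.val ξ - V (ℓ.val + 1) ξ|

/-- The feasible part of `Ξ_{ℓ+1}(η, k)`. -/
noncomputable def feasExt (n : ℕ) (a : Fin n → ℝ) (b : ℝ) (k : ℕ) (η : Fin n → Bool)
    (ℓ : Fin n) : Finset (Fin n → Bool) :=
  Finset.univ.filter (fun ξ : Fin n → Bool =>
    (∀ j : Fin n, j.val ≤ ℓ.val → ξ j = false) ∧
    (∀ j : Fin n, k ≤ j.val → ξ j = η j) ∧
    tailSum n (ℓ.val + 1) a ξ ≤ b)

/-- The sum of residuals bounding `Δ̄(k; i, η)`. -/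
noncomputable def bound (n : ℕ) (c a : Fin n → ℝ) (b : ℝ) (V : ℕ → (Fin n → Bool) → ℝ)
    (k : ℕ) (η : Fin n → Bool) : ℝ :=
  ∑ ℓ ∈ Finset.univ.filter (fun ℓ : Fin n => ℓ.val < k),
    ∑ ξ ∈ feasExt n a b k η ℓ, resid n c a b V ℓ ξ

lemma resid_nonneg (n : ℕ) (c a : Fin n → ℝ) (b : ℝ) (V : ℕ → (Fin n → Bool) → ℝ)
    (ℓ : Fin n) (ξ : Fin n → Bool) : 0 ≤ resid n c a b V ℓ ξ := by
  unfold resid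
  split_ifs <;> positivity

lemma bound_nonneg (n : ℕ) (c a : Fin n → ℝ) (b : ℝ) (V : ℕ → (Fin n → Bool) → ℝ)
    (k : ℕ) (η : Fin n → Bool) : 0 ≤ bound n c a b V k η :=
  Finset.sum_nonneg fun _ _ => Finset.sum_nonneg fun _ _ => resid_nonneg ..

lemma filter_lt_succ (n : ℕ) (p : Fin n) :
    Finset.univ.filter (fun j : Fin n => j.val < p.val + 1) =
      insert p (Finset.univ.filter (fun j : Fin n => j.val < p.val)) := by
  ext j
  simp only [Finset.mem_filter, Finset.mem_univ, true_and, Finset.mem_insert, Fin.ext_iff]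
  omega

lemma headSum_succ (n : ℕ) (p : Fin n) (a : Fin n → ℝ) (x : Fin n → Bool) :
    headSum n (p.val + 1) a x = (if x p then a p else 0) + headSum n p.val a x := by
  unfold headSum
  rw [filter_lt_succ, Finset.sum_insert (by simp)]

lemma tailSum_eq_add_succ (n : ℕ) (p : Fin n) (a : Fin n → ℝ) (ξ : Fin n → Bool) :
    tailSum n p.val a ξ = (if ξ p then a p else 0) + tailSum n (p.val + 1) a ξ := by
  have h : Finset.univ.filter (fun j : Fin n => p.val ≤ j.val) =
      insert p (Finset.univ.filter (fun j : Fin n => p.val + 1 ≤ j.val)) := by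
    ext j
    simp only [Finset.mem_filter, Finset.mem_univ, true_and, Finset.mem_insert, Fin.ext_iff]
    omega
  unfold tailSum
  rw [h, Finset.sum_insert (by simp)]

lemma headSum_congr (n k : ℕ) (a : Fin n → ℝ) (x y : Fin n → Bool)
    (h : ∀ j : Fin n, j.val < k → x j = y j) : headSum n k a x = headSum n k a y := by
  refine Finset.sum_congr rfl fun j hj => ?_
  rw [h j (Finset.mem_filter.1 hj).2]

lemma tailSum_congr (n k : ℕ) (a : Fin n → ℝ) (x y : Fin n → Bool)
    (h : ∀ j : Fin n, k ≤ j.val → x j = y j) : tailSum n k a x = tailSum n k a y := by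
  refine Finset.sum_congr rfl fun j hj => ?_
  rw [h j (Finset.mem_filter.1 hj).2]

lemma tailSum_upd (n : ℕ) (p : Fin n) (a : Fin n → ℝ) (ξ : Fin n → Bool) :
    tailSum n p.val a (upd n ξ p.val) = a p + tailSum n (p.val + 1) a ξ := by
  rw [tailSum_eq_add_succ, tailSum_congr n (p.val + 1) a (upd n ξ p.val) ξ]
  · simp [upd]
  · intro j hj
    simp only [upd]
    rw [if_neg (by omega)]

/-- For a feasible `ξ` the supremum defining `V*` is an attained maximum: the value set is finite,
and `x = 0` shows that it is non-empty. -/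
lemma knapSubVal_isGreatest (n : ℕ) (c a : Fin n → ℝ) (b : ℝ) (k : ℕ) (ξ : Fin n → Bool)
    (h : tailSum n k a ξ ≤ b) :
    IsGreatest {v | ∃ x : Fin n → Bool,
      headSum n k a x ≤ b - tailSum n k a ξ ∧ v = headSum n k c x}
      (knapSubVal n c a b k ξ) := by
  have hfin : {v | ∃ x : Fin n → Bool,
      headSum n k a x ≤ b - tailSum n k a ξ ∧ v = headSum n k c x}.Finite := by
    refine (Set.finite_range (fun x : Fin n → Bool => headSum n k c x)).subset ?_
    rintro v ⟨x, -, rfl⟩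
    exact ⟨x, rfl⟩
  have hne : {v | ∃ x : Fin n → Bool,
      headSum n k a x ≤ b - tailSum n k a ξ ∧ v = headSum n k c x}.Nonempty := by
    refine ⟨_, fun _ => false, ?_, rfl⟩
    simpa [headSum] using h
  exact ⟨hne.csSup_mem hfin, fun v hv => le_csSup hfin.bddAbove hv⟩

lemma knapSubVal_zero (n : ℕ) (c a : Fin n → ℝ) (b : ℝ) (ξ : Fin n → Bool)
    (h : tailSum n 0 a ξ ≤ b) : knapSubVal n c a b 0 ξ = 0 := by
  obtain ⟨x, -, hx⟩ := (knapSubVal_isGreatest n c a b 0 ξ h).1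
  rw [hx]
  simp [headSum]

/-- If item `p` no longer fits, no feasible `x` uses it: the head weights are nonnegative. -/
lemma knapSubVal_succ_of_not_fits (n : ℕ) (c a : Fin n → ℝ) (b : ℝ) (ha : ∀ j, 0 < a j)
    (p : Fin n) (η : Fin n → Bool) (hp : η p = false)
    (h : tailSum n (p.val + 1) a η ≤ b) (hfit : ¬ a p + tailSum n (p.val + 1) a η ≤ b) :
    knapSubVal n c a b (p.val + 1) η = knapSubVal n c a b p.val η := by
  have ht : tailSum n p.val a η = tailSum n (p.val + 1) a η := by
    rw [tailSum_eq_add_succ]; simp [hp]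
  obtain ⟨⟨x, hx, hxv⟩, hub⟩ := knapSubVal_isGreatest n c a b (p.val + 1) η h
  obtain ⟨⟨y, hy, hyv⟩, hub'⟩ := knapSubVal_isGreatest n c a b p.val η (ht ▸ h)
  apply le_antisymm
  · have hnn : 0 ≤ headSum n p.val a x :=
      Finset.sum_nonneg fun j _ => by split_ifs; exacts [(ha j).le, le_rfl]
    have hxp : x p = false := by
      by_contra hc
      rw [headSum_succ] at hx
      simp only [Bool.not_eq_false] at hc
      simp only [hc, if_true] at hx
      linarith
    rw [hxv]
    refine hub' ⟨x, ?_, ?_⟩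
    · rw [headSum_succ] at hx; simp only [hxp] at hx; simp at hx; rw [ht]; exact hx
    · rw [headSum_succ]; simp [hxp]
  · have hlow : ∀ j : Fin n, j.val < p.val → (fun j => if j = p then false else y j) j = y j := by
      intro j hj
      simp [Fin.ext_iff, hj.ne]
    rw [hyv]
    refine hub ⟨fun j => if j = p then false else y j, ?_, ?_⟩
    · rw [headSum_succ, headSum_congr _ _ _ _ _ hlow]; simpa [ht] using hy
    · rw [headSum_succ, headSum_congr _ _ _ _ _ hlow]; simp

lemma knapSubVal_succ_of_fits (n : ℕ) (c a : Fin n → ℝ) (b : ℝ)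
    (p : Fin n) (η : Fin n → Bool) (hp : η p = false)
    (h : tailSum n (p.val + 1) a η ≤ b) (hfit : a p + tailSum n (p.val + 1) a η ≤ b) :
    knapSubVal n c a b (p.val + 1) η =
      max (knapSubVal n c a b p.val η) (c p + knapSubVal n c a b p.val (upd n η p.val)) := by
  have ht : tailSum n p.val a η = tailSum n (p.val + 1) a η := by
    rw [tailSum_eq_add_succ]; simp [hp]
  have hu := tailSum_upd n p a η
  obtain ⟨⟨x, hx, hxv⟩, hub⟩ := knapSubVal_isGreatest n c a b (p.val + 1) η h
  obtain ⟨⟨y, hy, hyv⟩, hub₀⟩ := knapSubVal_isGreatest n c a b p.val η (ht ▸ h)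
  obtain ⟨⟨z, hz, hzv⟩, hub₁⟩ :=
    knapSubVal_isGreatest n c a b p.val (upd n η p.val) (hu ▸ hfit)
  -- Setting coordinate `p` of `y` to `t` does not affect the head sums below `p`.
  have hlow : ∀ (y : Fin n → Bool) (t : Bool) (j : Fin n), j.val < p.val →
      (fun j => if j = p then t else y j) j = y j := by
    intro y t j hj
    simp [Fin.ext_iff, hj.ne]
  apply le_antisymm
  · rw [hxv, headSum_succ]
    rw [headSum_succ] at hx
    cases hxp : x p
    · apply le_max_of_le_left
      simp only [hxp, Bool.false_eq_true, if_false, zero_add] at hx ⊢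
      exact hub₀ ⟨x, by rw [ht]; exact hx, rfl⟩
    · apply le_max_of_le_right
      simp only [hxp, if_true] at hx ⊢
      have := hub₁ ⟨x, by rw [hu]; linarith, rfl⟩
      linarith
  · apply max_le
    · rw [hyv]
      refine hub ⟨fun j => if j = p then false else y j, ?_, ?_⟩
      · rw [headSum_succ, headSum_congr _ _ _ _ _ (hlow y false)]; simpa [ht] using hy
      · rw [headSum_succ, headSum_congr _ _ _ _ _ (hlow y false)]; simp
    · rw [hzv]
      refine hub ⟨fun j => if j = p then true else z j, ?_, ?_⟩
      · rw [headSum_succ, headSum_congr _ _ _ _ _ (hlow z true)]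
        simp only [if_true]
        linarith
      · rw [headSum_succ, headSum_congr _ _ _ _ _ (hlow z true)]; simp

/-- The top level contributes only `ξ = η`; each lower level splits according to the value of
`ξ` at `p`. -/
lemma bound_succ (n : ℕ) (c a : Fin n → ℝ) (b : ℝ) (V : ℕ → (Fin n → Bool) → ℝ)
    (p : Fin n) (η : Fin n → Bool) (hη : ∀ j : Fin n, j.val < p.val + 1 → η j = false)
    (h : tailSum n (p.val + 1) a η ≤ b) :
    resid n c a b V p η + (bound n c a b V p.val η + bound n c a b V p.val (upd n η p.val)) ≤
      bound n c a b V (p.val + 1) η := by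
  unfold bound
  rw [filter_lt_succ, Finset.sum_insert (by simp), ← Finset.sum_add_distrib]
  refine add_le_add ?_ (Finset.sum_le_sum fun ℓ hℓ => ?_)
  · refine Finset.single_le_sum (f := fun ξ => resid n c a b V p ξ)
      (fun _ _ => resid_nonneg ..) ?_
    simp only [feasExt, Finset.mem_filter, Finset.mem_univ, true_and]
    exact ⟨fun j hj => hη j (by omega), fun _ _ => trivial, h⟩
  · have hdisj : Disjoint (feasExt n a b p.val η ℓ) (feasExt n a b p.val (upd n η p.val) ℓ) := by
      rw [Finset.disjoint_left]
      intro ξ h1 h2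
      simp only [feasExt, Finset.mem_filter, Finset.mem_univ, true_and] at h1 h2
      have e1 := h1.2.1 p le_rfl
      have e2 := h2.2.1 p le_rfl
      rw [e1, hη p (by omega)] at e2
      simp [upd] at e2
    rw [← Finset.sum_union hdisj]
    refine Finset.sum_le_sum_of_subset_of_nonneg ?_ (fun _ _ _ => resid_nonneg ..)
    intro ξ hξ
    simp only [feasExt, Finset.mem_union, Finset.mem_filter, Finset.mem_univ, true_and] at hξ ⊢
    rcases hξ with h1 | h1
    · exact ⟨h1.1, fun j hj => h1.2.1 j (by omega), h1.2.2⟩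
    · refine ⟨h1.1, fun j hj => ?_, h1.2.2⟩
      rw [h1.2.1 j (by omega)]
      simp only [upd]
      rw [if_neg (by omega)]

/-- The theorem in terms of `bound`, with the trivial case `k = 0` included to start the
induction. -/
lemma abs_sub_le_bound (n : ℕ) (c a : Fin n → ℝ) (b : ℝ) (ha : ∀ j, 0 < a j)
    (V : ℕ → (Fin n → Bool) → ℝ) (hV0 : ∀ ξ, V 0 ξ = 0) (k : ℕ) (hk : k ≤ n) :
    ∀ η : Fin n → Bool, (∀ j : Fin n, j.val < k → η j = false) → tailSum n k a η ≤ b →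
      |knapSubVal n c a b k η - V k η| ≤ bound n c a b V k η := by
  induction k with
  | zero =>
    intro η _ h
    rw [knapSubVal_zero n c a b η h, hV0]
    simpa using bound_nonneg n c a b V 0 η
  | succ k ih =>
    intro η hη h
    obtain ⟨p, rfl⟩ : ∃ p : Fin n, p.val = k := ⟨⟨k, hk⟩, rfl⟩
    have hp : η p = false := hη p (by omega)
    have ht : tailSum n p.val a η = tailSum n (p.val + 1) a η := by
      rw [tailSum_eq_add_succ]; simp [hp]
    have h0 := ih (by omega) η (fun j hj => hη j (by omega)) (ht ▸ h)
    refine le_trans ?_ (bound_succ n c a b V p η hη h)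
    have hnn := bound_nonneg n c a b V p.val (upd n η p.val)
    by_cases hfit : a p + tailSum n (p.val + 1) a η ≤ b
    · have h1 := ih (by omega) (upd n η p.val)
        (fun j hj => by simp only [upd]; rw [if_neg (by omega)]; exact hη j (by omega))
        (tailSum_upd n p a η ▸ hfit)
      rw [knapSubVal_succ_of_fits n c a b p η hp h hfit]
      simp only [resid, if_pos hfit]
      have hmax := abs_max_sub_max_le_max (knapSubVal n c a b p.val η)
        (c p + knapSubVal n c a b p.val (upd n η p.val)) (V p.val η)
        (c p + V p.val (upd n η p.val))
      rw [add_sub_add_left_eq_sub] at hmax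
      have hmax' := hmax.trans (max_le_add_of_nonneg (abs_nonneg _) (abs_nonneg _))
      have htri := abs_sub_le
        (max (knapSubVal n c a b p.val η) (c p + knapSubVal n c a b p.val (upd n η p.val)))
        (max (V p.val η) (c p + V p.val (upd n η p.val))) (V (p.val + 1) η)
      linarith
    · rw [knapSubVal_succ_of_not_fits n c a b ha p η hp h hfit]
      simp only [resid, if_neg hfit]
      have htri := abs_sub_le (knapSubVal n c a b p.val η) (V p.val η) (V (p.val + 1) η)
      linarith

/-- For a knapsack instance `i = (c,a,b)` of dimension `n` with
`a_j > 0` and `b ≥ 0`, a value function `V` for `i` (`V(0; i, ·) = 0`), `k ∈ {1,…,n}`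
and `η ∈ B_{n,k}` with `Σ_{j>k} a_j η_j ≤ b`:
`Δ̄(k; i, η) ≤ Σ_{ℓ=1}^{k} Σ { δ̄(ℓ; i, ξ) : ξ ∈ Ξ_ℓ(η,k), Σ_{j>ℓ} a_j ξ_j ≤ b }`.
Below the summation index `ℓ : Fin n` with `ℓ.val < k` represents the level
`ℓ.val + 1 ∈ {1,…,k}`, so `a_ℓ = a ℓ`, `c_ℓ = c ℓ` and `e^ℓ = upd · ℓ.val`. -/
theorem knap_Delta_le_sum_delta (n : ℕ) (c a : Fin n → ℝ) (b : ℝ)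
    (ha : ∀ j, 0 < a j) (hb : 0 ≤ b)
    (V : ℕ → (Fin n → Bool) → ℝ) (hV0 : ∀ ξ, V 0 ξ = 0)
    (k : ℕ) (hk1 : 1 ≤ k) (hk2 : k ≤ n)
    (η : Fin n → Bool) (hη : ∀ j : Fin n, j.val < k → η j = false)
    (hfeas : tailSum n k a η ≤ b) :
    |knapSubVal n c a b k η - V k η| ≤
      ∑ ℓ ∈ Finset.univ.filter (fun ℓ : Fin n => ℓ.val < k),
        ∑ ξ ∈ Finset.univ.filter (fun ξ : Fin n → Bool =>
            (∀ j : Fin n, j.val ≤ ℓ.val → ξ j = false) ∧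
            (∀ j : Fin n, k ≤ j.val → ξ j = η j) ∧
            tailSum n (ℓ.val + 1) a ξ ≤ b),
          (if a ℓ + tailSum n (ℓ.val + 1) a ξ ≤ b then
            |max (V ℓ.val ξ) (c ℓ + V ℓ.val (upd n ξ ℓ.val)) - V (ℓ.val + 1) ξ|
          else
            |V ℓ.val ξ - V (ℓ.val + 1) ξ|) := by
  exact abs_sub_le_bound n c a b ha V hV0 k hk2 η hη hfeas
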